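/- Let H be a bounded self-adjoint operator on an infinite-dimensional separable complex Hilbert space 𝓗 whose spectrum is a countable subset of ℂ, and let n be a positive integer. Then there exist bounded self-adjoint operators T₁, …, Tₙ on 𝓗 that pairwise commute and each commute with H, an orthonormal basis (e_k)_{k∈ℕ} of 𝓗 consisting of common eigenvectors of H and of every T_j, and real numbers λ_{j,k} with T_j e_k = λ_{j,k} • e_k, such that the map k ↦ (λ_{1,k}, …, λ_{n,k}) from ℕ to ℝⁿ is injective. -/

import Mathlib

/-!
Let `H` be normal with countable spectrum `σ`. For a vector `x ≠ 0`, the functions `f ∈ C(σ)` with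
`f(H) x = 0` form a proper closed ideal, hence are exactly the functions vanishing on some nonempty
closed set `K ⊆ σ`. As `K` is countable and compact, Baire's theorem yields an isolated point `z` of
`K`. If `g` is a bump function around `z` that vanishes on the rest of `K`, then `(f - f z) |g|²`
vanishes on `K` for all `f`, so `|g|²(H) x` is an eigenvector of `H`, and it is not orthogonal to
`x` because `⟪x, |g|²(H) x⟫ = ‖g(H) x‖² ≠ 0`. Thus no nonzero vector is orthogonal to all
eigenspaces of `H`, which gives an orthonormal basis of eigenvectors. Relabelling this basis by
`ℕⁿ`, the operators `T j` that multiply the basis vector of label `m` by `2 ^ (-m j)` are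
first integrals whose joint eigenvalues determine `m`.
-/

theorem exists_isOpen_singleton_of_countable {X : Type*} [TopologicalSpace X] [T1Space X]
    [BaireSpace X] [Countable X] [Nonempty X] : ∃ x : X, IsOpen {x} := by
  obtain ⟨x, hx⟩ := nonempty_interior_of_iUnion_of_closed
    (fun x : X => isClosed_singleton (x := x)) (Set.iUnion_of_singleton X)
  exact ⟨x, interior_eq_iff_isOpen.1 (hx.subset_singleton_iff.1 interior_subset)⟩

theorem exists_isOpen_inter_eq_singleton_of_countable {X : Type*} [TopologicalSpace X] [T2Space X]
    {K : Set X} (hK : IsCompact K) (hcount : K.Countable) (hne : K.Nonempty) :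
    ∃ z, ∃ U : Set X, IsOpen U ∧ U ∩ K = {z} := by
  have : CompactSpace K := isCompact_iff_compactSpace.1 hK
  have : Countable K := hcount.to_subtype
  have : Nonempty K := hne.to_subtype
  obtain ⟨z, hz⟩ := exists_isOpen_singleton_of_countable (X := K)
  obtain ⟨U, hU, hUz⟩ := isOpen_induced_iff.1 hz
  refine ⟨z, U, hU, ?_⟩
  rw [Set.inter_comm, ← Subtype.image_preimage_coe, hUz, Set.image_singleton]

section ClosedIdeal

variable {𝕜 X : Type*} [RCLike 𝕜] [TopologicalSpace X] [CompactSpace X] [T2Space X]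

theorem nonempty_compl_setOfIdeal {I : Ideal C(X, 𝕜)}
    (hI : IsClosed (I : Set C(X, 𝕜))) (hne : I ≠ ⊤) :
    (ContinuousMap.setOfIdeal I)ᶜ.Nonempty := by
  rw [Set.nonempty_compl]
  intro huniv
  refine hne ((Ideal.eq_top_iff_one I).2 ?_)
  rw [← ContinuousMap.idealOfSet_ofIdeal_isClosed hI, huniv]
  exact ContinuousMap.mem_idealOfSet.2 fun x hx => (hx (Set.mem_univ x)).elim

theorem exists_notMem_forall_sub_mul_mem [Countable X] {I : Ideal C(X, 𝕜)}
    (hI : IsClosed (I : Set C(X, 𝕜))) (hne : I ≠ ⊤) :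
    ∃ z : X, ∃ g ∉ I, ∀ f : C(X, 𝕜), (f - algebraMap 𝕜 C(X, 𝕜) (f z)) * g ∈ I := by
  obtain ⟨z, U, hU, hUz⟩ := exists_isOpen_inter_eq_singleton_of_countable
    (ContinuousMap.setOfIdeal_open I).isClosed_compl.isCompact (Set.to_countable _)
    (nonempty_compl_setOfIdeal hI hne)
  have hz : z ∈ U ∩ (ContinuousMap.setOfIdeal I)ᶜ := hUz ▸ Set.mem_singleton z
  obtain ⟨g, hgU, hgz⟩ : ∃ g ∈ ContinuousMap.idealOfSet 𝕜 U, g z ≠ 0 := by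
    rw [← ContinuousMap.mem_setOfIdeal, ContinuousMap.setOfIdeal_ofSet_of_isOpen 𝕜 hU]
    exact hz.1
  refine ⟨z, g, fun hg => hgz (ContinuousMap.notMem_setOfIdeal.1 hz.2 hg), fun f => ?_⟩
  rw [← ContinuousMap.idealOfSet_ofIdeal_isClosed hI, ContinuousMap.mem_idealOfSet]
  intro y hy
  by_cases hyU : y ∈ U
  · obtain rfl : y = z := hUz.subset ⟨hyU, hy⟩
    simp
  · simp [ContinuousMap.mem_idealOfSet.1 hgU hyU]

end ClosedIdeal

section Representation

variable {𝕜 X E : Type*} [RCLike 𝕜] [TopologicalSpace X]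
  [NormedAddCommGroup E] [InnerProductSpace 𝕜 E] [CompleteSpace E]
  (φ : C(X, 𝕜) →⋆ₐ[𝕜] (E →L[𝕜] E))

/-- The annihilator of the vector `x` under the representation `φ` of `C(X, 𝕜)`. -/
def vectorAnnihilator (x : E) : Ideal C(X, 𝕜) where
  carrier := {f | φ f x = 0}
  add_mem' {f g} (hf : φ f x = 0) (hg : φ g x = 0) := by simp [hf, hg]
  zero_mem' := by simp
  smul_mem' g f (hf : φ f x = 0) := by simp [hf]

variable {φ}

theorem mem_vectorAnnihilator {x : E} {f : C(X, 𝕜)} : f ∈ vectorAnnihilator φ x ↔ φ f x = 0 :=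
  Iff.rfl

theorem isClosed_vectorAnnihilator (hφ : Continuous φ) (x : E) :
    IsClosed (vectorAnnihilator φ x : Set C(X, 𝕜)) :=
  isClosed_eq (hφ.clm_apply continuous_const) continuous_const

theorem vectorAnnihilator_ne_top {x : E} (hx : x ≠ 0) : vectorAnnihilator φ x ≠ ⊤ := by
  rwa [Ideal.ne_top_iff_one, mem_vectorAnnihilator, map_one]

theorem inner_map_star_mul_self (g : C(X, 𝕜)) (x : E) :
    inner 𝕜 x (φ (star g * g) x) = (‖φ g x‖ : 𝕜) ^ 2 := by
  rw [map_mul, map_star, ContinuousLinearMap.star_eq_adjoint, mul_apply_eq_comp,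
    ContinuousLinearMap.adjoint_inner_right, inner_self_eq_norm_sq_to_K]

theorem exists_joint_eigenvector_inner_ne_zero [CompactSpace X] [T2Space X] [Countable X]
    (hφ : Continuous φ) {x : E} (hx : x ≠ 0) :
    ∃ (z : X) (v : E), (∀ f, φ f v = f z • v) ∧ inner 𝕜 x v ≠ 0 := by
  obtain ⟨z, g, hg, hfg⟩ := exists_notMem_forall_sub_mul_mem
    (isClosed_vectorAnnihilator hφ x) (vectorAnnihilator_ne_top hx)
  refine ⟨z, φ (star g * g) x, fun f => ?_, ?_⟩
  · have hmem := Ideal.mul_mem_left _ (star g) (hfg f)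
    rw [mul_left_comm, mem_vectorAnnihilator, map_mul, map_sub, AlgHomClass.commutes] at hmem
    simpa [sub_eq_zero, Algebra.algebraMap_eq_smul_one] using hmem
  · rw [inner_map_star_mul_self]
    exact pow_ne_zero 2 (RCLike.ofReal_ne_zero.2 (norm_ne_zero_iff.2 hg))

end Representation

section NormalOperator

open Module.End

variable {𝕜 E : Type*} [RCLike 𝕜] [NormedAddCommGroup E] [InnerProductSpace 𝕜 E] [CompleteSpace E]
  (H : E →L[𝕜] E) [IsStarNormal H]

theorem adjoint_apply_eq_conj_smul {μ : 𝕜} {v : E} (hv : H v = μ • v) :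
    ContinuousLinearMap.adjoint H v = starRingEnd 𝕜 μ • v := by
  have hnormal : IsStarNormal (H - μ • (1 : E →L[𝕜] E)) :=
    Commute.isStarNormal_sub (by simpa using (Commute.one_right H).smul_right (star μ))
  have hker : star (H - μ • (1 : E →L[𝕜] E)) v = 0 :=
    (ContinuousLinearMap.IsStarNormal.adjoint_apply_eq_zero_iff hnormal v).2 (by simp [hv])
  simpa [sub_eq_zero, ContinuousLinearMap.star_eq_adjoint] using hker

theorem orthogonalFamily_eigenspace :
    OrthogonalFamily 𝕜 (fun μ => eigenspace (H : E →ₗ[𝕜] E) μ)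
      fun μ => (eigenspace (H : E →ₗ[𝕜] E) μ).subtypeₗᵢ := by
  rintro μ ν hμν ⟨v, hv⟩ ⟨w, hw⟩
  have hHv : H v = μ • v := mem_eigenspace_iff.1 hv
  have hHw : H w = ν • w := mem_eigenspace_iff.1 hw
  have hmul : μ * inner 𝕜 v w = ν * inner 𝕜 v w := calc
    μ * inner 𝕜 v w = inner 𝕜 (ContinuousLinearMap.adjoint H v) w := by
      rw [adjoint_apply_eq_conj_smul H hHv, inner_smul_left, RingHomCompTriple.comp_apply,
        RingHom.id_apply]
    _ = inner 𝕜 v (H w) := ContinuousLinearMap.adjoint_inner_left H w v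
    _ = ν * inner 𝕜 v w := by rw [hHw, inner_smul_right]
  exact (mul_eq_mul_right_iff.1 hmul).resolve_left hμν

end NormalOperator

open Module.End in
theorem orthogonal_iSup_eigenspace_eq_bot {E : Type*} [NormedAddCommGroup E]
    [InnerProductSpace ℂ E] [CompleteSpace E] (H : E →L[ℂ] E) [hH : IsStarNormal H]
    (hcount : (spectrum ℂ H).Countable) : (⨆ μ, eigenspace (H : E →ₗ[ℂ] E) μ)ᗮ = ⊥ := by
  have : Countable (spectrum ℂ H) := hcount.to_subtype
  refine (Submodule.eq_bot_iff _).2 fun x hx => of_not_not fun hx0 => ?_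
  obtain ⟨z, v, hv, hxv⟩ := exists_joint_eigenvector_inner_ne_zero (cfcHom_continuous hH) hx0
  have hHv : H v = (z : ℂ) • v := by
    simpa only [cfcHom_id, ContinuousMap.restrict_apply, ContinuousMap.id_apply] using
      hv ((ContinuousMap.id ℂ).restrict (spectrum ℂ H))
  have hv_mem : v ∈ ⨆ μ, eigenspace (H : E →ₗ[ℂ] E) μ :=
    Submodule.mem_iSup_of_mem (z : ℂ) (mem_eigenspace_iff.2 hHv)
  exact hxv (Submodule.inner_left_of_mem_orthogonal hv_mem hx)

section HilbertBasis

variable {ι 𝕜 E : Type*} [RCLike 𝕜] [NormedAddCommGroup E] [InnerProductSpace 𝕜 E]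

theorem countable_of_orthonormal [TopologicalSpace.SeparableSpace E] {v : ι → E}
    (hv : Orthonormal 𝕜 v) : Countable ι := by
  refine Pairwise.countable_of_isOpen_disjoint (s := fun i => Metric.ball (v i) (1 / 2))
    (fun i j hij => Metric.ball_disjoint_ball ?_) (fun i => Metric.isOpen_ball)
    fun i => Metric.nonempty_ball.2 one_half_pos
  have hsq : ‖v i - v j‖ * ‖v i - v j‖ = 2 := by
    rw [@norm_sub_mul_self 𝕜, hv.2 hij, hv.1 i, hv.1 j]
    norm_num
  rw [dist_eq_norm]
  nlinarith [norm_nonneg (v i - v j)]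

theorem infinite_of_hilbertBasis (b : HilbertBasis ι 𝕜 E) (hdim : ¬ FiniteDimensional 𝕜 E) :
    Infinite ι := by
  refine not_finite_iff_infinite.1 fun _ => hdim ?_
  have := Fintype.ofFinite ι
  exact b.toOrthonormalBasis.toBasis.finiteDimensional_of_finite

theorem exists_hilbertBasis_comp_equiv [CompleteSpace E] {κ : Type*} (b : HilbertBasis ι 𝕜 E)
    (σ : κ ≃ ι) : ∃ e : HilbertBasis κ 𝕜 E, ⇑e = b ∘ σ := by
  have hspan : ⊤ ≤ (Submodule.span 𝕜 (Set.range (b ∘ σ))).topologicalClosure := by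
    rw [σ.surjective.range_comp, b.dense_span]
  exact ⟨HilbertBasis.mk (b.orthonormal.comp σ σ.injective) hspan, HilbertBasis.coe_mk _ _⟩

theorem mem_orthogonal_of_forall_inner_hilbertBasis_eq_zero {V : Submodule 𝕜 E}
    [V.HasOrthogonalProjection] (b : HilbertBasis ι 𝕜 V) {x : E}
    (hx : ∀ i, inner 𝕜 (b i : E) x = 0) : x ∈ Vᗮ := by
  rw [← Submodule.orthogonalProjectionOnto_eq_zero_iff, ← b.repr.map_eq_zero_iff]
  ext i
  rw [b.repr_apply_apply, Submodule.inner_orthogonalProjectionOnto_eq_of_mem_left]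
  exact hx i

theorem exists_hilbertBasis_forall_mem [CompleteSpace E] {V : ι → Submodule 𝕜 E}
    [∀ i, CompleteSpace (V i)] (hV : OrthogonalFamily 𝕜 (fun i => V i) fun i => (V i).subtypeₗᵢ)
    (hbot : (⨆ i, V i)ᗮ = ⊥) :
    ∃ (w : ∀ i, Set (V i)) (b : HilbertBasis (Σ i, w i) 𝕜 E), ∀ a, b a ∈ V a.1 := by
  choose w b _ using fun i => exists_hilbertBasis 𝕜 (V i)
  let v : (Σ i, w i) → E := fun a => b a.1 a.2
  have hv : Orthonormal 𝕜 v := hV.orthonormal_sigma_orthonormal fun i => (b i).orthonormal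
  have hspan : (Submodule.span 𝕜 (Set.range v))ᗮ = ⊥ := by
    rw [eq_bot_iff, ← hbot, ← Submodule.iInf_orthogonal]
    exact fun x hx => Submodule.mem_iInf _ |>.2 fun i =>
      mem_orthogonal_of_forall_inner_hilbertBasis_eq_zero (b i) fun k =>
        hx (v ⟨i, k⟩) (Submodule.subset_span ⟨_, rfl⟩)
  refine ⟨w, HilbertBasis.mkOfOrthogonalEqBot hv hspan, fun a => ?_⟩
  rw [HilbertBasis.coe_mkOfOrthogonalEqBot]
  exact (b a.1 a.2).2

end HilbertBasis

section DiagonalOperator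

open scoped lp ENNReal

variable {ι 𝕜 E : Type*} [RCLike 𝕜] [NormedAddCommGroup E] [InnerProductSpace 𝕜 E]
  (b : HilbertBasis ι 𝕜 E)

theorem eq_of_apply_hilbertBasis_eq {S T : E →L[𝕜] E} (h : ∀ i, S (b i) = T (b i)) : S = T :=
  ContinuousLinearMap.ext_on (Submodule.dense_iff_topologicalClosure_eq_top.2 b.dense_span)
    (Set.forall_mem_range.2 h)

theorem commute_of_apply_hilbertBasis_eq_smul {S T : E →L[𝕜] E} {s t : ι → 𝕜}
    (hS : ∀ i, S (b i) = s i • b i) (hT : ∀ i, T (b i) = t i • b i) : Commute S T :=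
  eq_of_apply_hilbertBasis_eq b fun i => by
    simp only [mul_apply_eq_comp, hS, hT, map_smul, smul_comm (s i)]

theorem isSelfAdjoint_of_apply_hilbertBasis_eq_smul [CompleteSpace E] {T : E →L[𝕜] E} {a : ι → ℝ}
    (hT : ∀ i, T (b i) = (a i : 𝕜) • b i) : IsSelfAdjoint T := by
  classical
  refine eq_of_apply_hilbertBasis_eq b fun j => b.repr.injective (lp.ext (funext fun i => ?_))
  rw [b.repr_apply_apply, b.repr_apply_apply, ContinuousLinearMap.star_eq_adjoint,
    ContinuousLinearMap.adjoint_inner_right, hT, hT, inner_smul_left, inner_smul_right,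
    RCLike.conj_ofReal, orthonormal_iff_ite.1 b.orthonormal]
  split_ifs with hij
  · rw [hij]
  · simp only [mul_zero]

theorem exists_apply_hilbertBasis_eq_smul {a : ι → 𝕜} {C : ℝ} (ha : ∀ i, ‖a i‖ ≤ C) :
    ∃ T : E →L[𝕜] E, ∀ i, T (b i) = a i • b i := by
  classical
  let D : ℓ²(ι, 𝕜) →L[𝕜] ℓ²(ι, 𝕜) :=
    lp.mapCLM 2 (fun i => a i • ContinuousLinearMap.id 𝕜 𝕜) (le_max_right C 0) fun i => by
      simpa [norm_smul] using Or.inl (ha i)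
  refine ⟨b.repr.symm.toContinuousLinearEquiv ∘L D ∘L b.repr.toContinuousLinearEquiv, fun i => ?_⟩
  have hD : D (b.repr (b i)) = a i • b.repr (b i) := by
    ext j
    by_cases hij : j = i <;> simp [D, b.repr_self, lp.single_apply, hij]
  simp [hD]

end DiagonalOperator

theorem exists_hilbertBasis_nat_forall_eigenvector {E : Type*} [NormedAddCommGroup E]
    [InnerProductSpace ℂ E] [CompleteSpace E] [TopologicalSpace.SeparableSpace E]
    (hdim : ¬ FiniteDimensional ℂ E) (H : E →L[ℂ] E) [IsStarNormal H]
    (hcount : (spectrum ℂ H).Countable) :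
    ∃ (e : HilbertBasis ℕ ℂ E) (μ : ℕ → ℂ), ∀ k, H (e k) = μ k • e k := by
  have hcomplete (μ : ℂ) : CompleteSpace (Module.End.eigenspace (H : E →ₗ[ℂ] E) μ) :=
    (H.isClosed_eigenspace μ).completeSpace_coe
  obtain ⟨w, b, hb⟩ := exists_hilbertBasis_forall_mem (orthogonalFamily_eigenspace H)
    (orthogonal_iSup_eigenspace_eq_bot H hcount)
  have := countable_of_orthonormal b.orthonormal
  have := infinite_of_hilbertBasis b hdim
  obtain ⟨σ⟩ : Nonempty (ℕ ≃ Σ μ, w μ) := nonempty_equiv_of_countable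
  obtain ⟨e, he⟩ := exists_hilbertBasis_comp_equiv b σ
  refine ⟨e, fun k => (σ k).1, fun k => ?_⟩
  rw [he]
  exact Module.End.mem_eigenspace_iff.1 (hb (σ k))

theorem countable_spectrum_hamiltonian_is_integrable_general
    {𝓗 : Type*} [NormedAddCommGroup 𝓗] [InnerProductSpace ℂ 𝓗] [CompleteSpace 𝓗]
    [TopologicalSpace.SeparableSpace 𝓗] (hdim : ¬ FiniteDimensional ℂ 𝓗)
    (H : 𝓗 →L[ℂ] 𝓗) (hH : IsStarNormal H) (hcount : (spectrum ℂ H).Countable)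
    (n : ℕ) (hn : 0 < n) :
    ∃ (T : Fin n → 𝓗 →L[ℂ] 𝓗) (e : HilbertBasis ℕ ℂ 𝓗) (lam : Fin n → ℕ → ℝ),
      (∀ j, IsSelfAdjoint (T j)) ∧
      (∀ j k, T j * T k = T k * T j) ∧
      (∀ j, H * T j = T j * H) ∧
      (∀ k, ∃ μ : ℂ, H (e k) = μ • e k) ∧
      (∀ j k, T j (e k) = (lam j k : ℂ) • e k) ∧
      Function.Injective (fun k : ℕ => fun j : Fin n => lam j k) := by
  obtain ⟨e, μ, hμ⟩ := exists_hilbertBasis_nat_forall_eigenvector hdim H hcount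
  have : Nonempty (Fin n) := ⟨⟨0, hn⟩⟩
  obtain ⟨σ⟩ : Nonempty (ℕ ≃ (Fin n → ℕ)) := nonempty_equiv_of_countable
  let lam (j : Fin n) (k : ℕ) : ℝ := (1 / 2) ^ σ k j
  have hlam (j : Fin n) (k : ℕ) : ‖(lam j k : ℂ)‖ ≤ 1 := by
    rw [Complex.norm_of_nonneg (by positivity)]
    exact pow_le_one₀ (by norm_num) (by norm_num)
  choose T hT using fun j => exists_apply_hilbertBasis_eq_smul e (hlam j)
  refine ⟨T, e, lam, fun j => isSelfAdjoint_of_apply_hilbertBasis_eq_smul e (hT j),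
    fun i j => commute_of_apply_hilbertBasis_eq_smul e (hT i) (hT j),
    fun j => commute_of_apply_hilbertBasis_eq_smul e hμ (hT j),
    fun k => ⟨μ k, hμ k⟩, hT, fun k l hkl => σ.injective (funext fun j => ?_)⟩
  exact pow_right_injective₀ (by norm_num) (by norm_num) (congrFun hkl j)

/-- Every bounded self-adjoint operator with countable spectrum on an
infinite-dimensional separable complex Hilbert space is completely integrable: for every
positive integer `n` there exist `n` pairwise commuting bounded self-adjoint operators
`T j` commuting with `H`, and an orthonormal basis `(e k)` of common eigenvectors of `H`
and of all the `T j`, whose joint `T`-eigenvalues `k ↦ (λ 1 k, …, λ n k)` form an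
injective map. -/
theorem countable_spectrum_hamiltonian_is_integrable
    {𝓗 : Type*} [NormedAddCommGroup 𝓗] [InnerProductSpace ℂ 𝓗] [CompleteSpace 𝓗]
    [TopologicalSpace.SeparableSpace 𝓗] (hdim : ¬ FiniteDimensional ℂ 𝓗)
    (H : 𝓗 →L[ℂ] 𝓗) (hH : IsSelfAdjoint H) (hcount : (spectrum ℂ H).Countable)
    (n : ℕ) (hn : 0 < n) :
    ∃ (T : Fin n → 𝓗 →L[ℂ] 𝓗) (e : HilbertBasis ℕ ℂ 𝓗) (lam : Fin n → ℕ → ℝ),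
      (∀ j, IsSelfAdjoint (T j)) ∧
      (∀ j k, T j * T k = T k * T j) ∧
      (∀ j, H * T j = T j * H) ∧
      (∀ k, ∃ μ : ℂ, H (e k) = μ • e k) ∧
      (∀ j k, T j (e k) = (lam j k : ℂ) • e k) ∧
      Function.Injective (fun k : ℕ => fun j : Fin n => lam j k) :=
  countable_spectrum_hamiltonian_is_integrable_general hdim H hH.isStarNormal hcount n hn
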